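/- arXiv:0704.1564 — 5 statements merged into one kernel-verified Lean document; each statement's English description precedes it below -/
import Mathlib

section
/- Entropic uncertainty principle, exact version: let H be a complex Hilbert space, (π_k)_{k=1}^N and (τ_j)_{j=1}^M two partitions of unity of bounded operators on H, v = (v_k)_{k=1}^N and w = (w_j)_{j=1}^M families of positive real numbers, and U a linear isometry of H. Set c = max_{j,k} w_j · v_k · ‖τ_j U π_k*‖ (operator norm). Then every unit vector ψ ∈ H satisfies p_{τ,w}(Uψ) + p_{π,v}(ψ) ≥ −2 · log c. -/
open Finset

/-- `η(s) = -s log s`. -/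
noncomputable def eta (s : ℝ) : ℝ := -s * Real.log s

/-- Pressure of a unit vector with respect to a quantum partition of unity `π`
and weights `v`. -/
noncomputable def pressure {H : Type*} [NormedAddCommGroup H] [InnerProductSpace ℂ H]
    {N : ℕ} (π : Fin N → H →L[ℂ] H) (v : Fin N → ℝ) (ψ : H) : ℝ :=
  (∑ k, eta (‖π k ψ‖ ^ 2)) - ∑ k, ‖π k ψ‖ ^ 2 * Real.log (v k ^ 2)

/-!
Put `φ = U ψ`. The amplitudes `r j k = ⟪τ_j* τ_j φ, U π_k* π_k ψ⟫` have marginals `‖τ_j φ‖²` and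
`‖π_k ψ‖²`, so the exponential sum `f z = ∑ j k, r j k * exp ((β j + α k) * z)` with frequencies
`β j = log (w_j ‖τ_j φ‖)` and `α k = log (v_k ‖π_k ψ‖)` satisfies `f 0 = 1`, and `-2 * f' 0` is the
sum of the two pressures. On `Re z = 0` the exponentials are unimodular and `‖f z‖ ≤ 1`, because a
partition of unity contracts such phases; on `Re z = 1` they turn `r j k` into
`‖τ_j φ‖² ‖π_k ψ‖²` times at most `c`, so `‖f z‖ ≤ c`. The three lines theorem gives
`‖f t‖ ≤ c ^ t` for `0 < t < 1`, and comparing derivatives at `t = 0` gives `f' 0 ≤ log c`.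
-/

section ThreeLines

open Filter Topology Complex.HadamardThreeLines

lemma hasDerivWithinAt_le_of_eventually_le {f g : ℝ → ℝ} {f' g' a : ℝ}
    (hf : HasDerivWithinAt f f' (Set.Ioi a) a) (hg : HasDerivWithinAt g g' (Set.Ioi a) a)
    (ha : f a = g a) (hle : ∀ᶠ t in 𝓝[>] a, f t ≤ g t) : f' ≤ g' := by
  rw [hasDerivWithinAt_iff_tendsto_slope' Set.self_notMem_Ioi] at hf hg
  refine le_of_tendsto_of_tendsto hf hg ?_
  filter_upwards [hle, self_mem_nhdsWithin] with t ht hat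
  simp only [slope_def_field, ha]
  have : 0 < t - a := sub_pos.2 hat
  gcongr

lemma hasDerivAt_rpow_interp_zero {a b : ℝ} (ha : 0 < a) (hb : 0 < b) :
    HasDerivAt (fun t : ℝ => a ^ (1 - t) * b ^ t) (a * Real.log (b / a)) 0 := by
  have hA := ((hasDerivAt_id (0 : ℝ)).const_sub 1).const_rpow ha
  have hB := (hasDerivAt_id (0 : ℝ)).const_rpow hb
  refine (hA.mul hB).congr_deriv ?_
  simp only [id_eq, sub_zero, Real.rpow_one, Real.rpow_zero, Real.log_div hb.ne' ha.ne']
  ring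

theorem re_deriv_le_mul_log_of_norm_le_on_strip {f : ℂ → ℂ} {f' : ℂ} {a b : ℝ}
    (ha : 0 < a) (hb : 0 < b) (hd : DiffContOnCl ℂ f (verticalStrip 0 1))
    (hB : BddAbove ((norm ∘ f) '' verticalClosedStrip 0 1))
    (hfa : ∀ z ∈ Complex.re ⁻¹' {0}, ‖f z‖ ≤ a) (hfb : ∀ z ∈ Complex.re ⁻¹' {1}, ‖f z‖ ≤ b)
    (h0 : f 0 = a) (hf : HasDerivAt f f' 0) : f'.re ≤ a * Real.log (b / a) := by
  have hre : HasDerivAt (fun t : ℝ => (f t).re) f'.re 0 := by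
    simpa using HasDerivAt.real_of_complex (z := 0) (by simpa using hf)
  refine hasDerivWithinAt_le_of_eventually_le hre.hasDerivWithinAt
    (hasDerivAt_rpow_interp_zero ha hb).hasDerivWithinAt (by simp [h0]) ?_
  filter_upwards [Ioo_mem_nhdsGT zero_lt_one] with t ht
  have hmem : (t : ℂ) ∈ verticalClosedStrip 0 1 := Set.Ioo_subset_Icc_self ht
  exact (Complex.re_le_norm _).trans
    (norm_le_interp_of_mem_verticalClosedStrip₀₁' f hmem hd hB hfa hfb)

end ThreeLines

section ExpSum

open Complex.HadamardThreeLines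

variable {ι κ : Type*} [Fintype ι] [Fintype κ]

/-- The entire function `z ↦ ∑ i, r i * exp (x i * z)` with real frequencies `x` and complex
amplitudes `r`, to which the three lines theorem is applied. -/
noncomputable def expSum (x : ι → ℝ) (r : ι → ℂ) (z : ℂ) : ℂ :=
  ∑ i, r i * Complex.exp (x i * z)

lemma expSum_zero (x : ι → ℝ) (r : ι → ℂ) : expSum x r 0 = ∑ i, r i := by
  simp [expSum]

lemma hasDerivAt_expSum (x : ι → ℝ) (r : ι → ℂ) (z : ℂ) :
    HasDerivAt (expSum x r) (expSum x (fun i => x i * r i) z) z := by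
  refine HasDerivAt.fun_sum fun i _ => ?_
  refine (((hasDerivAt_id z).const_mul (x i : ℂ)).cexp.const_mul (r i)).congr_deriv ?_
  simp only [id_eq]
  ring

lemma norm_expSum_le (x : ι → ℝ) (r : ι → ℂ) (z : ℂ) :
    ‖expSum x r z‖ ≤ ∑ i, ‖r i‖ * Real.exp (x i * z.re) := by
  refine (norm_sum_le _ _).trans_eq (Finset.sum_congr rfl fun i _ => ?_)
  rw [norm_mul, Complex.norm_exp, Complex.re_ofReal_mul]

lemma bddAbove_norm_expSum (x : ι → ℝ) (r : ι → ℂ) :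
    BddAbove ((norm ∘ expSum x r) '' verticalClosedStrip 0 1) := by
  refine ⟨∑ i, ‖r i‖ * Real.exp |x i|, ?_⟩
  rintro _ ⟨z, ⟨hz0, hz1⟩, rfl⟩
  refine (norm_expSum_le x r z).trans ?_
  gcongr with i
  calc x i * z.re ≤ |x i| * z.re := by gcongr; exact le_abs_self _
    _ ≤ |x i| := mul_le_of_le_one_right (abs_nonneg _) hz1

theorem sum_mul_re_le_log_of_norm_expSum_le_one {x : ι → ℝ} {r : ι → ℂ} {c : ℝ}
    (hr : ∑ i, r i = 1) (h0 : ∀ z : ℂ, z.re = 0 → ‖expSum x r z‖ ≤ 1)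
    (h1 : ∑ i, ‖r i‖ * Real.exp (x i) ≤ c) : ∑ i, x i * (r i).re ≤ Real.log c := by
  obtain ⟨i, -, hi⟩ := Finset.exists_ne_zero_of_sum_ne_zero (hr.trans_ne one_ne_zero)
  have hc : 0 < c := h1.trans_lt' <| Finset.sum_pos' (fun _ _ => by positivity)
    ⟨i, Finset.mem_univ i, by positivity⟩
  have hdiff : Differentiable ℂ (expSum x r) := fun z => (hasDerivAt_expSum x r z).differentiableAt
  have hlog := re_deriv_le_mul_log_of_norm_le_on_strip one_pos hc hdiff.diffContOnCl
    (bddAbove_norm_expSum x r) h0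
    (fun z hz => (norm_expSum_le x r z).trans (by simpa [Set.mem_singleton_iff.1 hz] using h1))
    (by rw [expSum_zero, hr, Complex.ofReal_one]) (hasDerivAt_expSum x r 0)
  simpa [expSum_zero] using hlog

lemma expSum_inner {H K : Type*} [NormedAddCommGroup H] [InnerProductSpace ℂ H]
    [NormedAddCommGroup K] [InnerProductSpace ℂ K] (U : H →L[ℂ] K)
    (β : κ → ℝ) (a : κ → K) (α : ι → ℝ) (b : ι → H) (z : ℂ) :
    expSum (fun p : κ × ι => β p.1 + α p.2) (fun p => inner ℂ (a p.1) (U (b p.2))) z =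
      inner ℂ (∑ j, Complex.exp (β j * star z) • a j) (U (∑ k, Complex.exp (α k * z) • b k)) := by
  simp only [expSum, Fintype.sum_prod_type_right, map_sum, map_smul, sum_inner, inner_sum,
    inner_smul_left, inner_smul_right, Finset.mul_sum, ← Complex.exp_conj, map_mul,
    Complex.conj_ofReal, RCLike.star_def, Complex.conj_conj]
  refine Finset.sum_congr rfl fun k _ => Finset.sum_congr rfl fun j _ => ?_
  rw [Complex.ofReal_add, add_mul, Complex.exp_add]
  ring

end ExpSum

section Partition

open ContinuousLinearMap (adjoint)

variable {𝕜 H K E : Type*} [RCLike 𝕜]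
  [NormedAddCommGroup H] [InnerProductSpace 𝕜 H] [CompleteSpace H]
  [NormedAddCommGroup K] [InnerProductSpace 𝕜 K] [CompleteSpace K]
  [NormedAddCommGroup E] [InnerProductSpace 𝕜 E] [CompleteSpace E]
  {ι : Type*}

lemma adjoint_apply_apply_eq_self_of_norm_le_one {U : H →L[𝕜] K} (hU : ‖U‖ ≤ 1) {x : H}
    (hx : ‖U x‖ = ‖x‖) : adjoint U (U x) = x := by
  have hU' : ‖adjoint U‖ ≤ 1 := by rwa [LinearIsometryEquiv.norm_map]
  refine eq_of_norm_le_re_inner_eq_norm_sq (𝕜 := 𝕜) ?_ ?_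
  · exact ((adjoint U).le_of_opNorm_le hU' (U x)).trans_eq (by rw [one_mul, hx])
  · rw [ContinuousLinearMap.adjoint_inner_left, ← norm_sq_eq_re_inner, hx]

/-- The component `π_k* π_k ψ` of `ψ` along the `k`-th member of the family `π`. -/
noncomputable def quantumComponent (π : ι → H →L[𝕜] E) (ψ : H) (k : ι) : H :=
  adjoint (π k) (π k ψ)

lemma inner_quantumComponent_right (π : ι → H →L[𝕜] E) (x ψ : H) (k : ι) :
    inner 𝕜 x (quantumComponent π ψ k) = inner 𝕜 (π k x) (π k ψ) :=
  ContinuousLinearMap.adjoint_inner_right _ _ _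

lemma inner_quantumComponent_left (π : ι → H →L[𝕜] E) (ψ x : H) (k : ι) :
    inner 𝕜 (quantumComponent π ψ k) x = inner 𝕜 (π k ψ) (π k x) :=
  ContinuousLinearMap.adjoint_inner_left _ _ _

variable [Fintype ι]

/-- A finite quantum partition of unity: `∑ k, π_k* π_k = 1`. The operators may take values in
a space other than `H`. -/
def IsQuantumPartition (π : ι → H →L[𝕜] E) : Prop :=
  ∑ k, adjoint (π k) ∘L π k = 1

namespace IsQuantumPartition

variable {π : ι → H →L[𝕜] E}

lemma sum_quantumComponent (hπ : IsQuantumPartition π) (ψ : H) :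
    ∑ k, quantumComponent π ψ k = ψ := by
  simpa [quantumComponent] using DFunLike.congr_fun hπ ψ

lemma sum_norm_sq (hπ : IsQuantumPartition π) (ψ : H) : ∑ k, ‖π k ψ‖ ^ 2 = ‖ψ‖ ^ 2 := by
  have h : inner 𝕜 ψ (∑ k, quantumComponent π ψ k) = inner 𝕜 ψ ψ := by
    rw [hπ.sum_quantumComponent]
  simp only [inner_sum, inner_quantumComponent_right, inner_self_eq_norm_sq_to_K] at h
  exact_mod_cast h

lemma sum_norm_mul_norm_le (hπ : IsQuantumPartition π) (x y : H) :
    ∑ k, ‖π k x‖ * ‖π k y‖ ≤ ‖x‖ * ‖y‖ := by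
  simpa [hπ.sum_norm_sq] using
    Real.sum_mul_le_sqrt_mul_sqrt Finset.univ (fun k => ‖π k x‖) fun k => ‖π k y‖

theorem norm_sum_smul_quantumComponent_le (hπ : IsQuantumPartition π) (ψ : H) {e : ι → 𝕜}
    (he : ∀ k, ‖e k‖ ≤ 1) : ‖∑ k, e k • quantumComponent π ψ k‖ ≤ ‖ψ‖ := by
  have hinner (x : H) : ‖inner 𝕜 x (∑ k, e k • quantumComponent π ψ k)‖ ≤ ‖x‖ * ‖ψ‖ := by
    rw [inner_sum]
    refine ((norm_sum_le _ _).trans (Finset.sum_le_sum fun k _ => ?_)).trans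
      (hπ.sum_norm_mul_norm_le x ψ)
    rw [inner_smul_right, norm_mul, inner_quantumComponent_right]
    exact (mul_le_of_le_one_left (norm_nonneg _) (he k)).trans (norm_inner_le_norm _ _)
  set X := ∑ k, e k • quantumComponent π ψ k
  rcases (norm_nonneg X).eq_or_lt with hX | hX
  · exact hX ▸ norm_nonneg ψ
  · refine le_of_mul_le_mul_left ?_ hX
    simpa [inner_self_eq_norm_mul_norm, inner_self_eq_norm_sq_to_K, sq] using hinner X

end IsQuantumPartition

end Partition

section LogWeight

variable {H E ι : Type*} [NormedAddCommGroup H] [InnerProductSpace ℂ H]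
  [NormedAddCommGroup E] [InnerProductSpace ℂ E]

/-- The frequency `log (v_k ‖π_k ψ‖)` attached to the `k`-th outcome. If `π_k ψ = 0` its value is
the junk `log 0 = 0`, which is harmless as it only occurs multiplied by `‖π_k ψ‖`. -/
noncomputable def logWeight (π : ι → H →L[ℂ] E) (v : ι → ℝ) (ψ : H) (k : ι) : ℝ :=
  Real.log (v k * ‖π k ψ‖)

lemma norm_mul_exp_logWeight (π : ι → H →L[ℂ] E) {v : ι → ℝ} (ψ : H) {k : ι} (hv : 0 < v k) :
    ‖π k ψ‖ * Real.exp (logWeight π v ψ k) = v k * ‖π k ψ‖ ^ 2 := by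
  rcases (norm_nonneg (π k ψ)).eq_or_lt with h | h
  · simp [← h]
  · rw [logWeight, Real.exp_log (by positivity)]
    ring

lemma pressure_eq_neg_two_mul_sum {N : ℕ} (π : Fin N → H →L[ℂ] H) {v : Fin N → ℝ}
    (hv : ∀ k, v k ≠ 0) (ψ : H) :
    pressure π v ψ = -2 * ∑ k, logWeight π v ψ k * ‖π k ψ‖ ^ 2 := by
  rw [pressure, ← Finset.sum_sub_distrib, Finset.mul_sum]
  refine Finset.sum_congr rfl fun k _ => ?_
  rcases eq_or_ne ‖π k ψ‖ 0 with h | h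
  · simp [eta, h]
  · rw [eta, logWeight, Real.log_mul (hv k) h, Real.log_pow, Real.log_pow]
    push_cast
    ring

end LogWeight

section Amplitude

open ContinuousLinearMap (adjoint)

variable {H K E F : Type*}
  [NormedAddCommGroup H] [InnerProductSpace ℂ H] [CompleteSpace H]
  [NormedAddCommGroup K] [InnerProductSpace ℂ K] [CompleteSpace K]
  [NormedAddCommGroup E] [InnerProductSpace ℂ E] [CompleteSpace E]
  [NormedAddCommGroup F] [InnerProductSpace ℂ F] [CompleteSpace F]
  {ι κ : Type*}

/-- The complex joint distribution `(j, k) ↦ ⟪τ_j* τ_j U ψ, U π_k* π_k ψ⟫` of the two measurements,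
whose marginals are the outcome probabilities `‖τ_j U ψ‖²` and `‖π_k ψ‖²`. -/
noncomputable def transitionAmplitude (π : ι → H →L[ℂ] E) (τ : κ → K →L[ℂ] F) (U : H →L[ℂ] K)
    (ψ : H) (p : κ × ι) : ℂ :=
  inner ℂ (quantumComponent τ (U ψ) p.1) (U (quantumComponent π ψ p.2))

variable {π : ι → H →L[ℂ] E} {τ : κ → K →L[ℂ] F} {U : H →L[ℂ] K} {ψ : H}

lemma norm_transitionAmplitude_le (j : κ) (k : ι) :
    ‖transitionAmplitude π τ U ψ (j, k)‖ ≤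
      ‖τ j (U ψ)‖ * (‖τ j ∘L U ∘L adjoint (π k)‖ * ‖π k ψ‖) := by
  rw [transitionAmplitude, inner_quantumComponent_left]
  refine (norm_inner_le_norm _ _).trans ?_
  gcongr
  exact (τ j ∘L U ∘L adjoint (π k)).le_opNorm (π k ψ)

lemma norm_transitionAmplitude_mul_exp_le {v : ι → ℝ} {w : κ → ℝ} {c : ℝ} {j : κ} {k : ι}
    (hv : 0 < v k) (hw : 0 < w j) (hc : w j * v k * ‖τ j ∘L U ∘L adjoint (π k)‖ ≤ c) :
    ‖transitionAmplitude π τ U ψ (j, k)‖ *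
        Real.exp (logWeight τ w (U ψ) j + logWeight π v ψ k) ≤
      ‖τ j (U ψ)‖ ^ 2 * ‖π k ψ‖ ^ 2 * c := by
  set T := τ j ∘L U ∘L adjoint (π k)
  set β := logWeight τ w (U ψ) j with hβ
  set α := logWeight π v ψ k with hα
  calc _ ≤ ‖τ j (U ψ)‖ * (‖T‖ * ‖π k ψ‖) * Real.exp (β + α) := by
        gcongr
        exact norm_transitionAmplitude_le j k
    _ = (‖τ j (U ψ)‖ * Real.exp β) * (‖π k ψ‖ * Real.exp α) * ‖T‖ := by
        rw [Real.exp_add]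
        ring
    _ = ‖τ j (U ψ)‖ ^ 2 * ‖π k ψ‖ ^ 2 * (w j * v k * ‖T‖) := by
        rw [hβ, hα, norm_mul_exp_logWeight τ (U ψ) hw, norm_mul_exp_logWeight π ψ hv]
        ring
    _ ≤ _ := by gcongr

lemma sum_transitionAmplitude_right [Fintype ι] (hπ : IsQuantumPartition π) (j : κ) :
    ∑ k, transitionAmplitude π τ U ψ (j, k) = (‖τ j (U ψ)‖ ^ 2 : ℝ) := by
  simp only [transitionAmplitude]
  rw [← inner_sum, ← map_sum, hπ.sum_quantumComponent, inner_quantumComponent_left,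
    inner_self_eq_norm_sq_to_K]
  norm_cast

variable [Fintype κ]

lemma sum_transitionAmplitude_left (hτ : IsQuantumPartition τ) (hU : ‖U‖ ≤ 1)
    (hUψ : ‖U ψ‖ = ‖ψ‖) (k : ι) :
    ∑ j, transitionAmplitude π τ U ψ (j, k) = (‖π k ψ‖ ^ 2 : ℝ) := by
  simp only [transitionAmplitude]
  rw [← sum_inner, hτ.sum_quantumComponent, ← ContinuousLinearMap.adjoint_inner_left,
    adjoint_apply_apply_eq_self_of_norm_le_one hU hUψ, inner_quantumComponent_right,
    inner_self_eq_norm_sq_to_K]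
  norm_cast

variable [Fintype ι]

lemma sum_transitionAmplitude (hπ : IsQuantumPartition π) (hτ : IsQuantumPartition τ) :
    ∑ p, transitionAmplitude π τ U ψ p = (‖U ψ‖ ^ 2 : ℝ) := by
  rw [Fintype.sum_prod_type, ← hτ.sum_norm_sq, Complex.ofReal_sum]
  exact Finset.sum_congr rfl fun j _ => sum_transitionAmplitude_right hπ j

lemma sum_add_mul_re_transitionAmplitude (hπ : IsQuantumPartition π) (hτ : IsQuantumPartition τ)
    (hU : ‖U‖ ≤ 1) (hUψ : ‖U ψ‖ = ‖ψ‖) (β : κ → ℝ) (α : ι → ℝ) :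
    ∑ p : κ × ι, (β p.1 + α p.2) * (transitionAmplitude π τ U ψ p).re =
      ∑ j, β j * ‖τ j (U ψ)‖ ^ 2 + ∑ k, α k * ‖π k ψ‖ ^ 2 := by
  simp_rw [add_mul, Finset.sum_add_distrib]
  congr 1
  · simp_rw [Fintype.sum_prod_type, ← Finset.mul_sum, ← Complex.re_sum,
      sum_transitionAmplitude_right hπ, Complex.ofReal_re]
  · simp_rw [Fintype.sum_prod_type_right, ← Finset.mul_sum, ← Complex.re_sum,
      sum_transitionAmplitude_left hτ hU hUψ, Complex.ofReal_re]

lemma norm_expSum_transitionAmplitude_le (hπ : IsQuantumPartition π) (hτ : IsQuantumPartition τ)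
    (β : κ → ℝ) (α : ι → ℝ) {z : ℂ} (hz : z.re = 0) :
    ‖expSum (fun p : κ × ι => β p.1 + α p.2) (transitionAmplitude π τ U ψ) z‖ ≤
      ‖U ψ‖ * (‖U‖ * ‖ψ‖) := by
  refine (congrArg norm (expSum_inner U β _ α _ z)).trans_le ((norm_inner_le_norm _ _).trans ?_)
  gcongr
  · exact hτ.norm_sum_smul_quantumComponent_le _ fun j => by simp [Complex.norm_exp, hz]
  · refine U.le_opNorm_of_le (hπ.norm_sum_smul_quantumComponent_le _ fun k => ?_)
    simp [Complex.norm_exp, hz]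

theorem sum_logWeight_mul_norm_sq_add_le_log (hπ : IsQuantumPartition π)
    (hτ : IsQuantumPartition τ) {v : ι → ℝ} {w : κ → ℝ} (hv : ∀ k, 0 < v k) (hw : ∀ j, 0 < w j)
    (hU : ‖U‖ ≤ 1) {c : ℝ} (hc : ∀ j k, w j * v k * ‖τ j ∘L U ∘L adjoint (π k)‖ ≤ c)
    (hψ : ‖ψ‖ = 1) (hUψ : ‖U ψ‖ = 1) :
    ∑ j, logWeight τ w (U ψ) j * ‖τ j (U ψ)‖ ^ 2 + ∑ k, logWeight π v ψ k * ‖π k ψ‖ ^ 2 ≤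
      Real.log c := by
  rw [← sum_add_mul_re_transitionAmplitude hπ hτ hU (hUψ.trans hψ.symm)]
  refine sum_mul_re_le_log_of_norm_expSum_le_one ?_ (fun z hz => ?_) ?_
  · simp [sum_transitionAmplitude hπ hτ, hUψ]
  · simpa [hψ, hUψ] using (norm_expSum_transitionAmplitude_le hπ hτ _ _ hz).trans
      (by simpa [hψ, hUψ] using hU)
  · calc _ ≤ ∑ p : κ × ι, ‖τ p.1 (U ψ)‖ ^ 2 * ‖π p.2 ψ‖ ^ 2 * c :=
          Finset.sum_le_sum fun p _ =>
            norm_transitionAmplitude_mul_exp_le (hv p.2) (hw p.1) (hc p.1 p.2)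
      _ = (∑ j, ‖τ j (U ψ)‖ ^ 2) * (∑ k, ‖π k ψ‖ ^ 2) * c := by
          rw [← Finset.sum_mul, Fintype.sum_prod_type, Finset.sum_mul_sum]
      _ = c := by simp [hπ.sum_norm_sq, hτ.sum_norm_sq, hψ, hUψ]

theorem entropic_uncertainty_exact_general {N M : ℕ}
    {π : Fin N → H →L[ℂ] H} {τ : Fin M → K →L[ℂ] K}
    (hπ : IsQuantumPartition π) (hτ : IsQuantumPartition τ)
    {v : Fin N → ℝ} {w : Fin M → ℝ} (hv : ∀ k, 0 < v k) (hw : ∀ j, 0 < w j)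
    {U : H →L[ℂ] K} (hU : ‖U‖ ≤ 1) {c : ℝ}
    (hc : ∀ j k, w j * v k * ‖τ j ∘L U ∘L adjoint (π k)‖ ≤ c)
    {ψ : H} (hψ : ‖ψ‖ = 1) (hUψ : ‖U ψ‖ = 1) :
    -2 * Real.log c ≤ pressure τ w (U ψ) + pressure π v ψ := by
  rw [pressure_eq_neg_two_mul_sum τ (fun j => (hw j).ne'),
    pressure_eq_neg_two_mul_sum π (fun k => (hv k).ne')]
  linarith [sum_logWeight_mul_norm_sq_add_le_log hπ hτ hv hw hU hc hψ hUψ]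

end Amplitude

/-- Entropic uncertainty principle, exact version. -/
theorem entropic_uncertainty_exact
    {H : Type*} [NormedAddCommGroup H] [InnerProductSpace ℂ H] [CompleteSpace H]
    {N M : ℕ} [NeZero N] [NeZero M]
    (π : Fin N → H →L[ℂ] H) (τ : Fin M → H →L[ℂ] H)
    (hπ : ∑ k, ContinuousLinearMap.adjoint (π k) ∘L π k = (1 : H →L[ℂ] H))
    (hτ : ∑ j, ContinuousLinearMap.adjoint (τ j) ∘L τ j = (1 : H →L[ℂ] H))
    (v : Fin N → ℝ) (w : Fin M → ℝ) (hv : ∀ k, 0 < v k) (hw : ∀ j, 0 < w j)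
    (U : H →L[ℂ] H) (hU : ∀ x, ‖U x‖ = ‖x‖)
    (c : ℝ)
    (hc : c = Finset.univ.sup' Finset.univ_nonempty fun jk : Fin M × Fin N =>
        w jk.1 * v jk.2 * ‖τ jk.1 ∘L U ∘L ContinuousLinearMap.adjoint (π jk.2)‖)
    (ψ : H) (hψ : ‖ψ‖ = 1) :
    pressure τ w (U ψ) + pressure π v ψ ≥ -2 * Real.log c := by
  have hU1 : ‖U‖ ≤ 1 := U.opNorm_le_bound zero_le_one fun x => by rw [hU, one_mul]
  refine entropic_uncertainty_exact_general hπ hτ hv hw hU1 (fun j k => ?_) hψ (by rw [hU, hψ])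
  exact hc ▸ Finset.le_sup' (fun jk : Fin M × Fin N => w jk.1 * v jk.2 *
    ‖τ jk.1 ∘L U ∘L ContinuousLinearMap.adjoint (π jk.2)‖) (Finset.mem_univ (j, k))
end

section
/- Maassen–Uffink entropic uncertainty principle: let (e_k)_{k=1}^N be an orthonormal basis of an N-dimensional complex Hilbert space H and U a unitary operator on H. Define c(U) = max_{j,k} |⟨e_k, U e_j⟩|. Then every unit vector ψ ∈ H satisfies h(Uψ) + h(ψ) ≥ −2 · log c(U), where h(φ) = Σ_{k=1}^N η(|⟨e_k, φ⟩|²). -/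
open Finset
open scoped InnerProductSpace

/-- Shannon entropy of a vector with respect to an orthonormal basis. -/
noncomputable def shannonEntropy {H : Type*} [NormedAddCommGroup H] [InnerProductSpace ℂ H]
    {N : ℕ} (e : OrthonormalBasis (Fin N) ℂ H) (φ : H) : ℝ :=
  ∑ k, eta (‖⟪e k, φ⟫_ℂ‖ ^ 2)

/-!
For a vector `φ` with coordinates `φₖ` let `φ(z)` have coordinates `φₖ |φₖ|ᶻ`, and consider the
entire function `F(z) = ⟪(Uψ)(z̄), U ψ(z)⟫`. It satisfies `F(0) = 1`; on `re z = 0` both vectors are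
unit vectors, so `|F| ≤ 1`; on `re z = 1` both have `ℓ¹`-norm `1`, so `|F| ≤ c`. The three lines
theorem gives `|F(t)| ≤ cᵗ` for `t ∈ [0, 1]`, with equality at `t = 0`. Comparing derivatives there
gives `F'(0) ≤ log c`, and since `U† U ψ = ψ` the sum of the two entropies is `-2 F'(0)`.
-/

open scoped ComplexConjugate

section ThreeLines

open Complex.HadamardThreeLines

theorem re_deriv_le_log_of_three_lines {F : ℂ → ℂ} {F' : ℂ} {c : ℝ} (hc : 0 < c)
    (hdiff : DiffContOnCl ℂ F (verticalStrip 0 1))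
    (hbdd : BddAbove ((norm ∘ F) '' verticalClosedStrip 0 1))
    (h_left : ∀ z : ℂ, z.re = 0 → ‖F z‖ ≤ 1) (h_right : ∀ z : ℂ, z.re = 1 → ‖F z‖ ≤ c)
    (hF0 : F 0 = 1) (hF' : HasDerivAt F F' 0) :
    F'.re ≤ Real.log c := by
  have h_interp : ∀ t ∈ Set.Ioo (0 : ℝ) 1, (F t).re ≤ c ^ t := fun t ht => by
    have ht' : (t : ℂ) ∈ verticalClosedStrip 0 1 := ⟨ht.1.le, ht.2.le⟩
    have h := norm_le_interp_of_mem_verticalClosedStrip₀₁' F ht' hdiff hbdd h_left h_right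
    rw [Real.one_rpow, one_mul, Complex.ofReal_re] at h
    exact (Complex.re_le_norm _).trans h
  have h_slope_re : HasDerivAt (fun t : ℝ => (F t).re) F'.re 0 :=
    HasDerivAt.real_of_complex (by simpa using hF')
  have h_slope_rpow : HasDerivAt (fun t : ℝ => c ^ t) (Real.log c) 0 := by
    simpa using (hasDerivAt_id (0 : ℝ)).const_rpow hc
  refine le_of_tendsto_of_tendsto h_slope_re.tendsto_slope_zero_right
    h_slope_rpow.tendsto_slope_zero_right ?_
  filter_upwards [Ioo_mem_nhdsGT one_pos] with t ht
  have ht_inv : 0 ≤ t⁻¹ := inv_nonneg.2 ht.1.le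
  simp only [zero_add, Complex.ofReal_zero, hF0, Complex.one_re, Real.rpow_zero, smul_eq_mul]
  gcongr
  exact h_interp t ht

end ThreeLines

section InnerProduct

variable {𝕜 E F : Type*} [RCLike 𝕜]
  [NormedAddCommGroup E] [InnerProductSpace 𝕜 E] [NormedAddCommGroup F] [InnerProductSpace 𝕜 F]

theorem hasDerivAt_inner_conj {f g : 𝕜 → E} {f' g' : E} {z : 𝕜}
    (hf : HasDerivAt f f' (conj z)) (hg : HasDerivAt g g' z) :
    HasDerivAt (fun z => ⟪f (conj z), g z⟫_𝕜) (⟪f (conj z), g'⟫_𝕜 + ⟪f', g z⟫_𝕜) z := by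
  have h_innerSL := hf.comp_semilinear (starRingEnd 𝕜) (innerSL 𝕜)
  rw [RCLike.conj_conj] at h_innerSL
  exact (h_innerSL.clm_apply hg).congr_deriv (add_comm _ _)

theorem adjoint_map_eq_self_of_norm_map_eq [CompleteSpace E] [CompleteSpace F] {T : E →L[𝕜] F}
    (hT : ‖T‖ ≤ 1) {x : E} (hx : ‖T x‖ = ‖x‖) : T.adjoint (T x) = x := by
  refine eq_of_norm_le_re_inner_eq_norm_sq (𝕜 := 𝕜) ?_ ?_
  · have hT' : ‖T.adjoint‖ ≤ 1 := by rwa [LinearIsometryEquiv.norm_map]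
    exact (T.adjoint.le_of_opNorm_le hT' _).trans_eq (by rw [one_mul, hx])
  · rw [ContinuousLinearMap.adjoint_inner_left, inner_self_eq_norm_sq, hx]

theorem norm_inner_map_le_mul_sum_mul_sum {ι κ : Type*} [Fintype ι] [Fintype κ]
    (e : OrthonormalBasis ι 𝕜 E) (f : OrthonormalBasis κ 𝕜 F) {T : E →ₗ[𝕜] F} {c : ℝ}
    (hc : ∀ j k, ‖⟪f k, T (e j)⟫_𝕜‖ ≤ c) (x : E) (y : F) :
    ‖⟪y, T x⟫_𝕜‖ ≤ c * ((∑ k, ‖⟪f k, y⟫_𝕜‖) * ∑ j, ‖⟪e j, x⟫_𝕜‖) := by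
  have h_expand : ⟪y, T x⟫_𝕜 = ∑ k, ∑ j, ⟪y, f k⟫_𝕜 * (⟪e j, x⟫_𝕜 * ⟪f k, T (e j)⟫_𝕜) := by
    simp_rw [← mul_sum, ← inner_smul_right, ← inner_sum, ← map_smul, ← map_sum, e.sum_repr',
      f.sum_inner_mul_inner]
  calc ‖⟪y, T x⟫_𝕜‖
      ≤ ∑ k, ∑ j, ‖⟪y, f k⟫_𝕜 * (⟪e j, x⟫_𝕜 * ⟪f k, T (e j)⟫_𝕜)‖ := by
        rw [h_expand]
        exact (norm_sum_le _ _).trans (sum_le_sum fun k _ => norm_sum_le _ _)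
    _ ≤ ∑ k, ∑ j, c * (‖⟪f k, y⟫_𝕜‖ * ‖⟪e j, x⟫_𝕜‖) := by
        refine sum_le_sum fun k _ => sum_le_sum fun j _ => ?_
        rw [norm_mul, norm_mul, norm_inner_symm, ← mul_assoc, mul_comm c]
        gcongr
        exact hc j k
    _ = c * ((∑ k, ‖⟪f k, y⟫_𝕜‖) * ∑ j, ‖⟪e j, x⟫_𝕜‖) := by
        simp_rw [sum_mul_sum, mul_sum]

theorem pos_of_norm_inner_map_le {ι κ : Type*} [Fintype ι] [Fintype κ]
    (e : OrthonormalBasis ι 𝕜 E) (f : OrthonormalBasis κ 𝕜 F) {T : E →ₗ[𝕜] F} {c : ℝ}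
    (hc : ∀ j k, ‖⟪f k, T (e j)⟫_𝕜‖ ≤ c) {x : E} (hx : T x ≠ 0) : 0 < c := by
  have h_inner : 0 < ‖⟪T x, T x⟫_𝕜‖ := norm_pos_iff.2 (inner_self_ne_zero.2 hx)
  exact pos_of_mul_pos_left
    (h_inner.trans_le (norm_inner_map_le_mul_sum_mul_sum e f hc x (T x))) (by positivity)

end InnerProduct

section PowTilt

variable {ι H : Type*} [Fintype ι] [NormedAddCommGroup H] [InnerProductSpace ℂ H]
  (e : OrthonormalBasis ι ℂ H) (φ : H)

/-- The vector `φ(z)` whose coordinates in the basis `e` are `φₖ |φₖ|ᶻ`, the holomorphic family to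
which the three lines theorem is applied. The power is written as `exp (z log |φₖ|)`, which is
entire in `z` also when `φₖ = 0`. -/
noncomputable def powTilt (z : ℂ) : H :=
  ∑ k, (⟪e k, φ⟫_ℂ * Complex.exp (z * Real.log ‖⟪e k, φ⟫_ℂ‖)) • e k

/-- The vector whose coordinates in the basis `e` are `φₖ log |φₖ|`, the derivative of `powTilt e φ`
at `0`. -/
noncomputable def logTilt : H :=
  ∑ k, (⟪e k, φ⟫_ℂ * Real.log ‖⟪e k, φ⟫_ℂ‖) • e k

theorem inner_powTilt (z : ℂ) (k : ι) :
    ⟪e k, powTilt e φ z⟫_ℂ = ⟪e k, φ⟫_ℂ * Complex.exp (z * Real.log ‖⟪e k, φ⟫_ℂ‖) :=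
  e.orthonormal.inner_right_fintype _ k

theorem powTilt_zero : powTilt e φ 0 = φ := by
  simp [powTilt, e.sum_repr']

theorem differentiable_powTilt : Differentiable ℂ (powTilt e φ) := by
  unfold powTilt
  fun_prop

theorem hasDerivAt_powTilt_zero : HasDerivAt (powTilt e φ) (logTilt e φ) 0 := by
  refine HasDerivAt.fun_sum fun k _ => HasDerivAt.smul_const ?_ (e k)
  simpa using (((hasDerivAt_id (0 : ℂ)).mul_const _).cexp).const_mul ⟪e k, φ⟫_ℂ

theorem sum_norm_inner_powTilt {z : ℂ} (hz : z.re = 1) :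
    ∑ k, ‖⟪e k, powTilt e φ z⟫_ℂ‖ = ‖φ‖ ^ 2 := by
  rw [← e.sum_sq_norm_inner_right φ]
  refine sum_congr rfl fun k _ => ?_
  rw [inner_powTilt, norm_mul, Complex.norm_exp, Complex.re_mul_ofReal, hz, one_mul]
  rcases eq_or_ne ⟪e k, φ⟫_ℂ 0 with h | h
  · simp [h]
  · rw [Real.exp_log (norm_pos_iff.2 h), sq]

variable {φ} in
theorem norm_powTilt_le (hφ : ‖φ‖ ≤ 1) {z : ℂ} (hz : 0 ≤ z.re) : ‖powTilt e φ z‖ ≤ ‖φ‖ := by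
  have h_coord (k : ι) : ‖⟪e k, powTilt e φ z⟫_ℂ‖ ≤ ‖⟪e k, φ⟫_ℂ‖ := by
    have h_log : Real.log ‖⟪e k, φ⟫_ℂ‖ ≤ 0 := by
      refine Real.log_nonpos (norm_nonneg _) ((norm_inner_le_norm _ _).trans ?_)
      rwa [e.norm_eq_one, one_mul]
    rw [inner_powTilt, norm_mul, Complex.norm_exp, Complex.re_mul_ofReal]
    exact mul_le_of_le_one_right (norm_nonneg _)
      (Real.exp_le_one_iff.2 (mul_nonpos_of_nonneg_of_nonpos hz h_log))
  refine (pow_le_pow_iff_left₀ (norm_nonneg _) (norm_nonneg _) two_ne_zero).1 ?_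
  rw [← e.sum_sq_norm_inner_right, ← e.sum_sq_norm_inner_right φ]
  gcongr with k
  exact h_coord k

end PowTilt

theorem re_inner_logTilt {H : Type*} [NormedAddCommGroup H] [InnerProductSpace ℂ H] {N : ℕ}
    (e : OrthonormalBasis (Fin N) ℂ H) (φ : H) :
    (⟪φ, logTilt e φ⟫_ℂ).re = -(shannonEntropy e φ / 2) := by
  have h_term (k : Fin N) :
      (⟪φ, (⟪e k, φ⟫_ℂ * Real.log ‖⟪e k, φ⟫_ℂ‖) • e k⟫_ℂ).re = -(eta (‖⟪e k, φ⟫_ℂ‖ ^ 2) / 2) := by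
    rw [inner_smul_right, mul_right_comm, ← inner_conj_symm φ, Complex.mul_conj',
      ← Complex.ofReal_pow, ← Complex.ofReal_mul, Complex.ofReal_re, eta, Real.log_pow]
    ring
  rw [logTilt, inner_sum, Complex.re_sum, shannonEntropy, sum_div, ← sum_neg_distrib]
  exact sum_congr rfl fun k _ => h_term k

section TiltedInner

variable {H K ι κ : Type*} [NormedAddCommGroup H] [InnerProductSpace ℂ H]
  [NormedAddCommGroup K] [InnerProductSpace ℂ K] [Fintype ι] [Fintype κ]
  (e : OrthonormalBasis ι ℂ H) (f : OrthonormalBasis κ ℂ K) (T : H →L[ℂ] K)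

/-- The function `F(z) = ⟪φ(z̄), T ψ(z)⟫` interpolated between `re z = 0` and `re z = 1`. The inner
product is antilinear in its first argument, so the conjugate of `z` there makes `F` holomorphic. -/
noncomputable def tiltedInner (φ : K) (ψ : H) (z : ℂ) : ℂ :=
  ⟪powTilt f φ (conj z), T (powTilt e ψ z)⟫_ℂ

theorem tiltedInner_zero (φ : K) (ψ : H) : tiltedInner e f T φ ψ 0 = ⟪φ, T ψ⟫_ℂ := by
  rw [tiltedInner, map_zero, powTilt_zero, powTilt_zero]

theorem differentiable_tiltedInner (φ : K) (ψ : H) : Differentiable ℂ (tiltedInner e f T φ ψ) :=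
  fun z => (hasDerivAt_inner_conj (differentiable_powTilt f φ (conj z)).hasDerivAt
    (T.differentiable.comp (differentiable_powTilt e ψ) z).hasDerivAt).differentiableAt

theorem hasDerivAt_tiltedInner_zero (φ : K) (ψ : H) :
    HasDerivAt (tiltedInner e f T φ ψ) (⟪φ, T (logTilt e ψ)⟫_ℂ + ⟪logTilt f φ, T ψ⟫_ℂ) 0 := by
  have h_left : HasDerivAt (powTilt f φ) (logTilt f φ) (conj 0) := by
    rw [map_zero]
    exact hasDerivAt_powTilt_zero f φ
  have h_right := T.hasFDerivAt.comp_hasDerivAt 0 (hasDerivAt_powTilt_zero e ψ)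
  refine (hasDerivAt_inner_conj h_left h_right).congr_deriv ?_
  rw [map_zero, powTilt_zero, Function.comp_apply, powTilt_zero]

theorem norm_tiltedInner_le_opNorm {φ : K} {ψ : H} (hφ : ‖φ‖ ≤ 1) (hψ : ‖ψ‖ ≤ 1)
    {z : ℂ} (hz : 0 ≤ z.re) : ‖tiltedInner e f T φ ψ z‖ ≤ ‖T‖ := by
  have h_left : ‖powTilt f φ (conj z)‖ ≤ 1 :=
    (norm_powTilt_le f hφ (by rwa [Complex.conj_re])).trans hφ
  have h_right : ‖T (powTilt e ψ z)‖ ≤ ‖T‖ :=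
    T.unit_le_opNorm _ ((norm_powTilt_le e hψ hz).trans hψ)
  exact (norm_inner_le_norm _ _).trans
    ((mul_le_mul h_left h_right (norm_nonneg _) zero_le_one).trans_eq (one_mul _))

variable {T} in
theorem norm_tiltedInner_le_of_re_eq_one {c : ℝ}
    (hc : ∀ j k, ‖⟪f k, T (e j)⟫_ℂ‖ ≤ c) (φ : K) (ψ : H) {z : ℂ} (hz : z.re = 1) :
    ‖tiltedInner e f T φ ψ z‖ ≤ c * (‖φ‖ ^ 2 * ‖ψ‖ ^ 2) := by
  rw [← sum_norm_inner_powTilt e ψ hz, ← sum_norm_inner_powTilt f φ (z := conj z) hz]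
  exact norm_inner_map_le_mul_sum_mul_sum e f (T := T.toLinearMap) hc _ _

end TiltedInner

theorem maassen_uffink_general
    {H K : Type*} [NormedAddCommGroup H] [InnerProductSpace ℂ H]
    [NormedAddCommGroup K] [InnerProductSpace ℂ K] {M N : ℕ}
    (e : OrthonormalBasis (Fin M) ℂ H) (f : OrthonormalBasis (Fin N) ℂ K)
    (T : H →L[ℂ] K) (hT : ‖T‖ ≤ 1)
    (c : ℝ) (hc : ∀ j k, ‖⟪f k, T (e j)⟫_ℂ‖ ≤ c)
    (ψ : H) (hψ : ‖ψ‖ = 1) (hTψ : ‖T ψ‖ = 1) :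
    -2 * Real.log c ≤ shannonEntropy f (T ψ) + shannonEntropy e ψ := by
  have := e.toBasis.finiteDimensional_of_finite
  have := f.toBasis.finiteDimensional_of_finite
  have := FiniteDimensional.complete ℂ H
  have := FiniteDimensional.complete ℂ K
  have h_zero : tiltedInner e f T (T ψ) ψ 0 = 1 := by
    rw [tiltedInner_zero, inner_self_eq_one_of_norm_eq_one hTψ]
  have h_strip {z : ℂ} (hz : 0 ≤ z.re) : ‖tiltedInner e f T (T ψ) ψ z‖ ≤ 1 :=
    (norm_tiltedInner_le_opNorm e f T hTψ.le hψ.le hz).trans hT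
  have h_right (z : ℂ) (hz : z.re = 1) : ‖tiltedInner e f T (T ψ) ψ z‖ ≤ c := by
    simpa [hψ, hTψ] using norm_tiltedInner_le_of_re_eq_one e f hc (T ψ) ψ hz
  have hc_pos : 0 < c := pos_of_norm_inner_map_le e f (T := T.toLinearMap) (x := ψ) hc
    (norm_ne_zero_iff.1 (hTψ.trans_ne one_ne_zero))
  have h_adjoint : ⟪T ψ, T (logTilt e ψ)⟫_ℂ = ⟪ψ, logTilt e ψ⟫_ℂ := by
    rw [← T.adjoint_inner_left, adjoint_map_eq_self_of_norm_map_eq hT (hTψ.trans hψ.symm)]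
  have h_log := re_deriv_le_log_of_three_lines hc_pos
    (differentiable_tiltedInner e f T (T ψ) ψ).diffContOnCl
    ⟨1, Set.forall_mem_image.2 fun z hz => h_strip hz.1⟩ (fun z hz => h_strip hz.ge) h_right h_zero
    (hasDerivAt_tiltedInner_zero e f T (T ψ) ψ)
  rw [h_adjoint, Complex.add_re, re_inner_logTilt, ← inner_conj_symm, Complex.conj_re,
    re_inner_logTilt] at h_log
  linarith

/-- Maassen–Uffink entropic uncertainty principle. -/
theorem maassen_uffink
    {H : Type*} [NormedAddCommGroup H] [InnerProductSpace ℂ H] [CompleteSpace H]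
    {N : ℕ} [NeZero N]
    (e : OrthonormalBasis (Fin N) ℂ H)
    (U : H →L[ℂ] H) (hU : U ∈ unitary (H →L[ℂ] H))
    (c : ℝ)
    (hc : c = Finset.univ.sup' Finset.univ_nonempty fun jk : Fin N × Fin N =>
        ‖⟪e jk.2, U (e jk.1)⟫_ℂ‖)
    (ψ : H) (hψ : ‖ψ‖ = 1) :
    shannonEntropy e (U ψ) + shannonEntropy e ψ ≥ -2 * Real.log c :=
  maassen_uffink_general e e U
    (U.opNorm_le_bound zero_le_one fun v => by rw [U.norm_map_of_mem_unitary hU, one_mul]) c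
    (fun j k => hc ▸ le_sup' (fun jk : Fin N × Fin N => ‖⟪e jk.2, U (e jk.1)⟫_ℂ‖) (mem_univ (j, k)))
    ψ hψ ((U.norm_map_of_mem_unitary hU ψ).trans hψ)
end

section
/- Entropy lower bound for eigenvectors of a unitary matrix: let (e_k)_{k=1}^N be an orthonormal basis of an N-dimensional complex Hilbert space H, U a unitary operator on H, and c(U) = max_{j,k} |⟨e_k, U e_j⟩|. If ψ ∈ H is a unit vector with Uψ = λψ for some scalar λ, then h(ψ) ≥ −log c(U), where h(ψ) = Σ_{k=1}^N η(|⟨e_k, ψ⟩|²). -/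
open Finset
open scoped InnerProductSpace

/-!
An eigenvector `ψ` of `U` has the same entropy as `Uψ`, so the bound is a case of the
Maassen–Uffink uncertainty relation `h(ψ) + h(Uψ) ≥ -2 log c(U)`. For the latter let `|ψ|^z` be the
operator which is diagonal in the basis `(e_k)`, with entries `|⟨e_k, ψ⟩|^z`. The analytic function
`F(z) = ⟨Uψ, |Uψ|^z U |ψ|^z ψ⟩` satisfies `F(0) = 1`, is bounded by `1` on `Re z ≥ 0`, and by `c(U)`
on `Re z = 1`. The three lines theorem gives `|F(x)| ≤ c(U)^x` for `0 ≤ x ≤ 1`, with equality at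
`x = 0`, so comparing right derivatives there yields `Re F'(0) ≤ log c(U)`; and
`F'(0) = -(h(ψ) + h(Uψ)) / 2`, because `U† U ψ = ψ`.
-/

open Complex hiding eta
open Filter Topology ComplexConjugate

section StripDerivative

lemma le_of_hasDerivWithinAt_Ioi_of_eventually_le {f g : ℝ → ℝ} {f' g' x : ℝ}
    (hf : HasDerivWithinAt f f' (Set.Ioi x) x) (hg : HasDerivWithinAt g g' (Set.Ioi x) x)
    (hx : f x = g x) (hfg : ∀ᶠ y in 𝓝[>] x, f y ≤ g y) : f' ≤ g' := by
  rw [hasDerivWithinAt_iff_tendsto_slope' Set.self_notMem_Ioi] at hf hg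
  refine le_of_tendsto_of_tendsto hf hg ?_
  filter_upwards [hfg, self_mem_nhdsWithin] with y hy hxy
  rw [slope_def_field, slope_def_field, hx]
  have : 0 ≤ y - x := sub_nonneg.2 (le_of_lt hxy)
  gcongr

open HadamardThreeLines in
lemma re_deriv_zero_le_log_of_norm_le {F : ℂ → ℂ} {F' : ℂ} {c : ℝ} (hc : 0 < c)
    (hF : DiffContOnCl ℂ F (verticalStrip 0 1)) (hF' : HasDerivAt F F' 0) (hF0 : F 0 = 1)
    (hbdd : BddAbove ((norm ∘ F) '' verticalClosedStrip 0 1))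
    (hleft : ∀ z : ℂ, z.re = 0 → ‖F z‖ ≤ 1) (hright : ∀ z : ℂ, z.re = 1 → ‖F z‖ ≤ c) :
    F'.re ≤ Real.log c := by
  have hre : HasDerivAt (fun x : ℝ => (F x).re) F'.re 0 :=
    HasDerivAt.real_of_complex (by simpa using hF')
  have hpow : HasDerivAt (fun x : ℝ => c ^ x) (Real.log c) 0 := by
    simpa using (Real.hasStrictDerivAt_const_rpow hc 0).hasDerivAt
  refine le_of_hasDerivWithinAt_Ioi_of_eventually_le hre.hasDerivWithinAt hpow.hasDerivWithinAt
    (by simp [hF0]) ?_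
  filter_upwards [Ioo_mem_nhdsGT (zero_lt_one (α := ℝ))] with x hx
  have hmem : (x : ℂ) ∈ verticalClosedStrip 0 1 := by
    simpa [verticalClosedStrip] using And.intro hx.1.le hx.2.le
  calc (F x).re ≤ ‖F x‖ := re_le_norm _
    _ ≤ c ^ x := by
      simpa using norm_le_interp_of_mem_verticalClosedStrip₀₁' F hmem hF hbdd hleft hright

end StripDerivative

section Contraction

variable {𝕜 H K : Type*} [RCLike 𝕜] [NormedAddCommGroup H] [InnerProductSpace 𝕜 H]
  [NormedAddCommGroup K] [InnerProductSpace 𝕜 K]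

lemma adjoint_apply_of_norm_apply_eq [CompleteSpace H] [CompleteSpace K] {U : H →L[𝕜] K}
    (hU : ‖U‖ ≤ 1) {ψ : H} (hψ : ‖U ψ‖ = ‖ψ‖) : U.adjoint (U ψ) = ψ := by
  have hle : ‖U.adjoint (U ψ)‖ ≤ ‖ψ‖ := by
    simpa [hψ] using U.adjoint.le_of_opNorm_le (c := 1) (by simpa using hU) (U ψ)
  have hinner : RCLike.re ⟪U.adjoint (U ψ), ψ⟫_𝕜 = ‖ψ‖ ^ 2 := by
    rw [U.adjoint_inner_left, inner_self_eq_norm_sq, hψ]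
  have hsq : ‖U.adjoint (U ψ) - ψ‖ ^ 2 ≤ 0 := by
    rw [norm_sub_sq (𝕜 := 𝕜), hinner]
    nlinarith [norm_nonneg (U.adjoint (U ψ))]
  exact sub_eq_zero.1 (norm_eq_zero.1 (pow_eq_zero_iff two_ne_zero |>.1
    (le_antisymm hsq (sq_nonneg _))))

variable {ι κ : Type*} [Fintype ι] [Fintype κ]
  (e : OrthonormalBasis ι 𝕜 H) (f : OrthonormalBasis κ 𝕜 K)

lemma inner_apply_eq_sum_sum (U : H →L[𝕜] K) (x : K) (y : H) :
    ⟪x, U y⟫_𝕜 = ∑ k, ∑ j, ⟪x, f k⟫_𝕜 * (⟪f k, U (e j)⟫_𝕜 * ⟪e j, y⟫_𝕜) := by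
  rw [← f.sum_inner_mul_inner x (U y)]
  refine sum_congr rfl fun k _ => ?_
  rw [← mul_sum]
  congr 1
  conv_lhs => rw [← e.sum_repr' y]
  simp only [map_sum, map_smul, inner_sum, inner_smul_right, mul_comm]

lemma norm_inner_apply_le {U : H →L[𝕜] K} {c : ℝ} (hc : ∀ j k, ‖⟪f k, U (e j)⟫_𝕜‖ ≤ c)
    (x : K) (y : H) :
    ‖⟪x, U y⟫_𝕜‖ ≤ (∑ k, ‖⟪f k, x⟫_𝕜‖) * c * ∑ j, ‖⟪e j, y⟫_𝕜‖ := by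
  rw [inner_apply_eq_sum_sum e f, sum_mul, sum_mul]
  refine norm_sum_le_of_le _ fun k _ => ?_
  rw [mul_sum]
  refine norm_sum_le_of_le _ fun j _ => ?_
  rw [norm_mul, norm_mul, norm_inner_symm, mul_assoc]
  gcongr
  exact hc j k

lemma pos_of_norm_inner_le {U : H →L[𝕜] K} {c : ℝ} (hc : ∀ j k, ‖⟪f k, U (e j)⟫_𝕜‖ ≤ c)
    {ψ : H} (hψ : U ψ ≠ 0) : 0 < c := by
  by_contra! hc0
  have hle : ‖⟪U ψ, U ψ⟫_𝕜‖ ≤ 0 :=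
    (norm_inner_apply_le e f hc (U ψ) ψ).trans
      (mul_nonpos_of_nonpos_of_nonneg (mul_nonpos_of_nonneg_of_nonpos (by positivity) hc0)
        (by positivity))
  exact hψ (inner_self_eq_zero.1 (norm_le_zero_iff.1 hle))

end Contraction

section Diagonal

variable {𝕜 H ι : Type*} [RCLike 𝕜] [NormedAddCommGroup H] [InnerProductSpace 𝕜 H] [Fintype ι]
  (e : OrthonormalBasis ι 𝕜 H)

/-- The operator acting diagonally in the orthonormal basis `e`, with diagonal entries `d`,
written as a combination of rank-one projections so that it is visibly linear in `d`. -/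
noncomputable def diagonalCLM (d : ι → 𝕜) : H →L[𝕜] H :=
  ∑ k, d k • InnerProductSpace.rankOne 𝕜 (e k) (e k)

lemma inner_basis_diagonalCLM (d : ι → 𝕜) (k : ι) (x : H) :
    ⟪e k, diagonalCLM e d x⟫_𝕜 = d k * ⟪e k, x⟫_𝕜 := by
  have h : diagonalCLM e d x = ∑ k, (d k * ⟪e k, x⟫_𝕜) • e k := by
    simp [diagonalCLM, mul_smul]
  rw [h, e.orthonormal.inner_right_fintype]

lemma diagonalCLM_one : diagonalCLM e 1 = .id 𝕜 H := by
  simp [diagonalCLM, e.sum_rankOne_eq_id]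

lemma inner_diagonalCLM_right (d : ι → 𝕜) (x y : H) :
    ⟪x, diagonalCLM e d y⟫_𝕜 = ⟪diagonalCLM e (fun k => conj (d k)) x, y⟫_𝕜 := by
  rw [← e.sum_inner_mul_inner, ← e.sum_inner_mul_inner (diagonalCLM e _ x)]
  refine sum_congr rfl fun k _ => ?_
  rw [← inner_conj_symm (diagonalCLM e _ x), inner_basis_diagonalCLM, inner_basis_diagonalCLM,
    map_mul, RCLike.conj_conj, inner_conj_symm]
  ring

lemma inner_diagonalCLM_self (d : ι → 𝕜) (x : H) :
    ⟪x, diagonalCLM e d x⟫_𝕜 = ∑ k, d k * ((‖⟪e k, x⟫_𝕜‖ ^ 2 : ℝ) : 𝕜) := by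
  rw [← e.sum_inner_mul_inner]
  refine sum_congr rfl fun k _ => ?_
  rw [inner_basis_diagonalCLM, ← inner_conj_symm x, mul_left_comm, RCLike.conj_mul]
  norm_cast

lemma norm_diagonalCLM_le_one {d : ι → 𝕜} (hd : ∀ k, ‖d k‖ ≤ 1) : ‖diagonalCLM e d‖ ≤ 1 := by
  refine ContinuousLinearMap.opNorm_le_bound _ zero_le_one fun x => ?_
  rw [one_mul, ← sq_le_sq₀ (norm_nonneg _) (norm_nonneg _), ← e.sum_sq_norm_inner_right,
    ← e.sum_sq_norm_inner_right x]
  gcongr with k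
  rw [inner_basis_diagonalCLM, norm_mul]
  exact mul_le_of_le_one_left (norm_nonneg _) (hd k)

lemma hasDerivAt_diagonalCLM {d : 𝕜 → ι → 𝕜} {d' : ι → 𝕜} {z : 𝕜} (hd : HasDerivAt d d' z) :
    HasDerivAt (fun w => diagonalCLM e (d w)) (diagonalCLM e d') z :=
  HasDerivAt.fun_sum fun k _ =>
    (hasDerivAt_pi.1 hd k).smul_const (InnerProductSpace.rankOne 𝕜 (e k) (e k))

end Diagonal

section ModulusPow

variable {H ι : Type*} [NormedAddCommGroup H] [InnerProductSpace ℂ H] [Fintype ι]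
  (e : OrthonormalBasis ι ℂ H)

/-- The entries `|⟨e k, φ⟩| ^ z` of the operator `|φ| ^ z`. They are written as exponentials, so
that a zero coordinate (where `Real.log 0 = 0`) has the entry `1` and all are entire in `z`. -/
noncomputable def modulusPow (φ : H) (z : ℂ) (k : ι) : ℂ :=
  exp (z * Real.log ‖⟪e k, φ⟫_ℂ‖)

lemma norm_modulusPow (φ : H) (z : ℂ) (k : ι) :
    ‖modulusPow e φ z k‖ = Real.exp (z.re * Real.log ‖⟪e k, φ⟫_ℂ‖) := by
  simp [modulusPow, norm_exp]

lemma modulusPow_zero (φ : H) : modulusPow e φ 0 = 1 := by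
  ext k
  simp [modulusPow]

lemma norm_modulusPow_le_one {φ : H} (hφ : ‖φ‖ ≤ 1) {z : ℂ} (hz : 0 ≤ z.re) (k : ι) :
    ‖modulusPow e φ z k‖ ≤ 1 := by
  have hcoord : ‖⟪e k, φ⟫_ℂ‖ ≤ 1 := by
    simpa using (norm_inner_le_norm (e k) φ).trans (by simpa using hφ)
  rw [norm_modulusPow, Real.exp_le_one_iff]
  exact mul_nonpos_of_nonneg_of_nonpos hz (Real.log_nonpos (norm_nonneg _) hcoord)

lemma norm_modulusPow_mul_norm_inner (φ : H) {z : ℂ} (hz : z.re = 1) (k : ι) :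
    ‖modulusPow e φ z k‖ * ‖⟪e k, φ⟫_ℂ‖ = ‖⟪e k, φ⟫_ℂ‖ ^ 2 := by
  rcases (norm_nonneg ⟪e k, φ⟫_ℂ).eq_or_lt' with h | h
  · simp [h]
  · rw [norm_modulusPow, hz, one_mul, Real.exp_log h, sq]

lemma sum_norm_modulusPow_mul_norm_inner (φ : H) {z : ℂ} (hz : z.re = 1) :
    ∑ k, ‖modulusPow e φ z k‖ * ‖⟪e k, φ⟫_ℂ‖ = ‖φ‖ ^ 2 := by
  simp only [norm_modulusPow_mul_norm_inner e φ hz, e.sum_sq_norm_inner_right]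

lemma hasDerivAt_modulusPow (φ : H) (z : ℂ) :
    HasDerivAt (modulusPow e φ)
      (fun k => modulusPow e φ z k * Real.log ‖⟪e k, φ⟫_ℂ‖) z :=
  hasDerivAt_pi.2 fun _ => (hasDerivAt_mul_const _).cexp

end ModulusPow

section Interpolant

variable {H K ι κ : Type*} [NormedAddCommGroup H] [InnerProductSpace ℂ H] [NormedAddCommGroup K]
  [InnerProductSpace ℂ K] [Fintype ι] [Fintype κ]
  (e : OrthonormalBasis ι ℂ H) (f : OrthonormalBasis κ ℂ K) (U : H →L[ℂ] K) (ψ : H)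

/-- The analytic function `z ↦ ⟨Uψ, |Uψ|^z U |ψ|^z ψ⟩` to which the three lines theorem is
applied; `|ψ|^z` is diagonal in the basis `e` and `|Uψ|^z` in the basis `f`. -/
noncomputable def interpolant (z : ℂ) : ℂ :=
  ⟪U ψ, diagonalCLM f (modulusPow f (U ψ) z) (U (diagonalCLM e (modulusPow e ψ z) ψ))⟫_ℂ

lemma interpolant_zero : interpolant e f U ψ 0 = ‖U ψ‖ ^ 2 := by
  simp [interpolant, modulusPow_zero, diagonalCLM_one, inner_self_eq_norm_sq_to_K]

lemma hasDerivAt_interpolant (z : ℂ) :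
    HasDerivAt (interpolant e f U ψ)
      (⟪U ψ, diagonalCLM f (fun k => modulusPow f (U ψ) z k * Real.log ‖⟪f k, U ψ⟫_ℂ‖)
          (U (diagonalCLM e (modulusPow e ψ z) ψ))⟫_ℂ +
        ⟪U ψ, diagonalCLM f (modulusPow f (U ψ) z)
          (U (diagonalCLM e (fun j => modulusPow e ψ z j * Real.log ‖⟪e j, ψ⟫_ℂ‖) ψ))⟫_ℂ) z := by
  have he := hasDerivAt_diagonalCLM e (hasDerivAt_modulusPow e ψ z)
  have hf := hasDerivAt_diagonalCLM f (hasDerivAt_modulusPow f (U ψ) z)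
  have hU := U.hasFDerivAt.comp_hasDerivAt z (he.clm_apply (hasDerivAt_const z ψ))
  have h := (innerSL ℂ (U ψ)).hasFDerivAt.comp_hasDerivAt z (hf.clm_apply hU)
  refine h.congr_deriv ?_
  simp [inner_add_right]

lemma hasDerivAt_interpolant_zero [CompleteSpace H] [CompleteSpace K] (hU : ‖U‖ ≤ 1)
    (hψ : ‖U ψ‖ = ‖ψ‖) :
    HasDerivAt (interpolant e f U ψ)
      (⟪U ψ, diagonalCLM f (fun k => (Real.log ‖⟪f k, U ψ⟫_ℂ‖ : ℂ)) (U ψ)⟫_ℂ +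
        ⟪ψ, diagonalCLM e (fun j => (Real.log ‖⟪e j, ψ⟫_ℂ‖ : ℂ)) ψ⟫_ℂ) 0 := by
  have hadj (x : H) : ⟪U ψ, U x⟫_ℂ = ⟪ψ, x⟫_ℂ := by
    rw [← U.adjoint_inner_left, adjoint_apply_of_norm_apply_eq hU hψ]
  simpa [modulusPow_zero, diagonalCLM_one, hadj] using hasDerivAt_interpolant e f U ψ 0

variable {U ψ}

lemma norm_interpolant_le_one (hU : ‖U‖ ≤ 1) (hψ : ‖ψ‖ ≤ 1) {z : ℂ} (hz : 0 ≤ z.re) :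
    ‖interpolant e f U ψ z‖ ≤ 1 := by
  have hUψ : ‖U ψ‖ ≤ 1 := (U.unit_le_opNorm ψ hψ).trans hU
  have he : ‖diagonalCLM e (modulusPow e ψ z) ψ‖ ≤ 1 :=
    (ContinuousLinearMap.unit_le_opNorm _ ψ hψ).trans
      (norm_diagonalCLM_le_one e (norm_modulusPow_le_one e hψ hz))
  have hUe : ‖U (diagonalCLM e (modulusPow e ψ z) ψ)‖ ≤ 1 := (U.unit_le_opNorm _ he).trans hU
  have hf : ‖diagonalCLM f (modulusPow f (U ψ) z) (U (diagonalCLM e (modulusPow e ψ z) ψ))‖ ≤ 1 :=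
    (ContinuousLinearMap.unit_le_opNorm _ _ hUe).trans
      (norm_diagonalCLM_le_one f (norm_modulusPow_le_one f hUψ hz))
  exact (norm_inner_le_norm _ _).trans (mul_le_one₀ hUψ (norm_nonneg _) hf)

lemma norm_interpolant_le_of_re_eq_one {c : ℝ} (hc : ∀ j k, ‖⟪f k, U (e j)⟫_ℂ‖ ≤ c)
    {z : ℂ} (hz : z.re = 1) : ‖interpolant e f U ψ z‖ ≤ ‖U ψ‖ ^ 2 * c * ‖ψ‖ ^ 2 := by
  rw [interpolant, inner_diagonalCLM_right]
  refine (norm_inner_apply_le e f hc _ _).trans_eq ?_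
  simp only [inner_basis_diagonalCLM, norm_mul, RCLike.norm_conj,
    sum_norm_modulusPow_mul_norm_inner _ _ hz]

end Interpolant

section Entropy

variable {H K : Type*} [NormedAddCommGroup H] [InnerProductSpace ℂ H]
  [NormedAddCommGroup K] [InnerProductSpace ℂ K] {M N : ℕ}
  (e : OrthonormalBasis (Fin M) ℂ H) (f : OrthonormalBasis (Fin N) ℂ K)

lemma shannonEntropy_smul_of_norm_eq_one {a : ℂ} (ha : ‖a‖ = 1) (φ : H) :
    shannonEntropy e (a • φ) = shannonEntropy e φ := by
  simp [shannonEntropy, ha]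

lemma inner_diagonalCLM_log_self (φ : H) :
    ⟪φ, diagonalCLM e (fun k => (Real.log ‖⟪e k, φ⟫_ℂ‖ : ℂ)) φ⟫_ℂ =
      ((-shannonEntropy e φ / 2 : ℝ) : ℂ) := by
  rw [inner_diagonalCLM_self, shannonEntropy, ← sum_neg_distrib, sum_div]
  push_cast
  refine sum_congr rfl fun k _ => ?_
  simp only [eta, Real.log_pow, coe_algebraMap]
  push_cast
  ring

theorem maassen_uffink_s3 {U : H →L[ℂ] K} (hU : ‖U‖ ≤ 1) {c : ℝ}
    (hc : ∀ j k, ‖⟪f k, U (e j)⟫_ℂ‖ ≤ c) {ψ : H} (hψ : ‖ψ‖ = 1) (hUψ : ‖U ψ‖ = 1) :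
    -2 * Real.log c ≤ shannonEntropy e ψ + shannonEntropy f (U ψ) := by
  have := e.toBasis.finiteDimensional_of_finite
  have := f.toBasis.finiteDimensional_of_finite
  have := FiniteDimensional.complete ℂ H
  have := FiniteDimensional.complete ℂ K
  have hderiv := hasDerivAt_interpolant_zero e f U ψ hU (hUψ.trans hψ.symm)
  rw [inner_diagonalCLM_log_self, inner_diagonalCLM_log_self, ← ofReal_add] at hderiv
  have hc_pos : 0 < c := pos_of_norm_inner_le e f hc (ne_zero_of_norm_ne_zero (hUψ ▸ one_ne_zero))
  have hdiff : Differentiable ℂ (interpolant e f U ψ) := fun z =>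
    (hasDerivAt_interpolant e f U ψ z).differentiableAt
  have hhalf {z : ℂ} (hz : 0 ≤ z.re) : ‖interpolant e f U ψ z‖ ≤ 1 :=
    norm_interpolant_le_one e f hU hψ.le hz
  have hlog := re_deriv_zero_le_log_of_norm_le hc_pos hdiff.diffContOnCl hderiv
    (by simp [interpolant_zero, hUψ]) ⟨1, Set.forall_mem_image.2 fun z hz => hhalf hz.1⟩
    (fun z hz => hhalf hz.ge)
    (fun z hz => by simpa [hψ, hUψ] using norm_interpolant_le_of_re_eq_one e f hc hz (ψ := ψ))
  rw [ofReal_re] at hlog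
  linarith

theorem entropy_lower_bound_eigenvector_general {U : H →L[ℂ] H} (hU : ‖U‖ ≤ 1) {c : ℝ}
    (hc : ∀ j k, ‖⟪e k, U (e j)⟫_ℂ‖ ≤ c) {ψ : H} (hψ : ‖ψ‖ = 1) {lam : ℂ} (hlam : ‖lam‖ = 1)
    (heig : U ψ = lam • ψ) : shannonEntropy e ψ ≥ -Real.log c := by
  have h := maassen_uffink_s3 e e hU hc hψ (by rw [heig, norm_smul, hlam, hψ, one_mul])
  rw [heig, shannonEntropy_smul_of_norm_eq_one e hlam] at h
  linarith

end Entropy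

section Unitary

variable {𝕜 H : Type*} [RCLike 𝕜] [NormedAddCommGroup H] [InnerProductSpace 𝕜 H] [CompleteSpace H]
  {U : H →L[𝕜] H}

lemma norm_le_one_of_mem_unitary (hU : U ∈ unitary (H →L[𝕜] H)) : ‖U‖ ≤ 1 :=
  U.opNorm_le_bound zero_le_one fun x => by rw [U.norm_map_of_mem_unitary hU, one_mul]

lemma norm_eigenvalue_eq_one_of_mem_unitary (hU : U ∈ unitary (H →L[𝕜] H)) {ψ : H} (hψ : ψ ≠ 0)
    {a : 𝕜} (heig : U ψ = a • ψ) : ‖a‖ = 1 := by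
  have h := U.norm_map_of_mem_unitary hU ψ
  rwa [heig, norm_smul, mul_eq_right₀ (norm_ne_zero_iff.2 hψ)] at h

end Unitary

/-- Entropy lower bound for eigenvectors of a unitary matrix. -/
theorem entropy_lower_bound_eigenvector
    {H : Type*} [NormedAddCommGroup H] [InnerProductSpace ℂ H] [CompleteSpace H]
    {N : ℕ} [NeZero N]
    (e : OrthonormalBasis (Fin N) ℂ H)
    (U : H →L[ℂ] H) (hU : U ∈ unitary (H →L[ℂ] H))
    (c : ℝ)
    (hc : c = Finset.univ.sup' Finset.univ_nonempty fun jk : Fin N × Fin N =>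
        ‖⟪e jk.2, U (e jk.1)⟫_ℂ‖)
    (ψ : H) (hψ : ‖ψ‖ = 1) (lam : ℂ) (heig : U ψ = lam • ψ) :
    shannonEntropy e ψ ≥ -Real.log c := by
  have hψ0 : ψ ≠ 0 := ne_zero_of_norm_ne_zero (hψ ▸ one_ne_zero)
  exact entropy_lower_bound_eigenvector_general e (norm_le_one_of_mem_unitary hU)
    (fun j k => hc ▸ le_sup' (fun jk : Fin N × Fin N => ‖⟪e jk.2, U (e jk.1)⟫_ℂ‖)
      (mem_univ (j, k)))
    hψ (norm_eigenvalue_eq_one_of_mem_unitary hU hψ0 heig) heig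
end

section
/- Upper semicontinuity of the partition entropy rate along weakly convergent invariant measures: let X be a compact metric space, T : X → X a continuous map, and P = (E_1, …, E_K) a finite partition of X into Borel sets. Let (μ_i)_{i∈ℕ} and μ be Borel probability measures on X, each invariant under T, such that μ_i → μ in the topology of weak convergence of probability measures, and suppose μ(∂E_k) = 0 for every k = 1,…,K (∂ denotes the topological boundary). Then h_KS(μ,P) ≥ limsup_{i→∞} h_KS(μ_i,P), where h_KS(ν,P) := inf_{n≥1} h_n(ν,P)/n. -/
open MeasureTheory Finset Filter

/-- Cylinder set `E_α = E_{α_0} ∩ T⁻¹E_{α_1} ∩ … ∩ T^{-(n-1)}E_{α_{n-1}}`. -/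
def cyl {X : Type*} {K : ℕ} (T : X → X) (E : Fin K → Set X)
    (n : ℕ) (α : Fin n → Fin K) : Set X :=
  ⋂ j : Fin n, T^[(j : ℕ)] ⁻¹' E (α j)

/-- Refined entropy `h_n(μ, P) = Σ_α η(μ(E_α))`. -/
noncomputable def refEntropy {X : Type*} [MeasurableSpace X] (μ : Measure X)
    {K : ℕ} (T : X → X) (E : Fin K → Set X) (n : ℕ) : ℝ :=
  ∑ α : Fin n → Fin K, eta (μ (cyl T E n α)).toReal

/-- Entropy of an invariant measure relative to the partition:
`h_KS(ν, P) = inf_{n ≥ 1} h_n(ν, P)/n`. -/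
noncomputable def hKS {X : Type*} [MeasurableSpace X] (μ : Measure X)
    {K : ℕ} (T : X → X) (E : Fin K → Set X) : ℝ :=
  ⨅ n : {m : ℕ // 1 ≤ m}, refEntropy μ T E n / (n : ℝ)

/-!
The boundary of a cylinder lies in the union of preimages under iterates of `T` of the boundaries
of the `E k`; such preimages are null for an invariant measure. So, by the portmanteau theorem,
each `h_n(·, P)` is continuous at `μ` for the weak topology, and an infimum of functions that are
continuous at `μ` is upper semicontinuous there.
-/

theorem frontier_iInter_subset_iUnion_frontier {X ι : Type*} [TopologicalSpace X] [Finite ι]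
    (A : ι → Set X) : frontier (⋂ j, A j) ⊆ ⋃ j, frontier (A j) := by
  rintro x ⟨hx_closure, hx_interior⟩
  rw [interior_iInter_of_finite, Set.mem_iInter, not_forall] at hx_interior
  obtain ⟨j, hj⟩ := hx_interior
  exact Set.mem_iUnion.2 ⟨j, closure_mono (Set.iInter_subset A j) hx_closure, hj⟩

theorem limsup_comp_le_of_upperSemicontinuousAt {X ι R : Type*} [TopologicalSpace X]
    [ConditionallyCompleteLinearOrder R] {f : X → R} {x : X} {u : ι → X} {l : Filter ι}
    (hf : UpperSemicontinuousAt f x) (hu : Tendsto u l (nhds x))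
    (hco : l.IsCoboundedUnder (· ≤ ·) fun i => f (u i)) :
    l.limsup (fun i => f (u i)) ≤ f x := by
  have hlt : ∀ y, f x < y → ∀ᶠ i in l, f (u i) < y := fun y hy => hu.eventually (hf y hy)
  have hbdd : l.IsBoundedUnder (· ≤ ·) fun i => f (u i) := by
    rcases isTop_or_exists_gt (f x) with htop | ⟨y, hy⟩
    · exact isBoundedUnder_of ⟨f x, fun i => htop _⟩
    · exact isBoundedUnder_of_eventually_le ((hlt y hy).mono fun _ => le_of_lt)
  exact (limsup_le_iff hco hbdd).2 hlt

theorem continuousAt_measureReal_of_null_frontier {X : Type*} [TopologicalSpace X]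
    [MeasurableSpace X] [OpensMeasurableSpace X] [HasOuterApproxClosed X]
    {μ : ProbabilityMeasure X} {A : Set X} (hA : (μ : Measure X) (frontier A) = 0) :
    ContinuousAt (fun ν : ProbabilityMeasure X => (ν : Measure X).real A) μ :=
  (ENNReal.tendsto_toReal (measure_ne_top _ _)).comp
    (ProbabilityMeasure.tendsto_measure_of_null_frontier_of_tendsto' tendsto_id hA)

theorem eta_eq_negMulLog : eta = Real.negMulLog := rfl

section PartitionEntropy

variable {X : Type*} [MeasurableSpace X] {K : ℕ}

theorem refEntropy_nonneg (ν : Measure X) [IsZeroOrProbabilityMeasure ν] (T : X → X)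
    (E : Fin K → Set X) (n : ℕ) : 0 ≤ refEntropy ν T E n :=
  sum_nonneg fun _ _ => Real.negMulLog_nonneg measureReal_nonneg measureReal_le_one

theorem hKS_nonneg (ν : Measure X) [IsZeroOrProbabilityMeasure ν] (T : X → X)
    (E : Fin K → Set X) : 0 ≤ hKS ν T E :=
  Real.iInf_nonneg fun n => div_nonneg (refEntropy_nonneg ν T E n) (Nat.cast_nonneg _)

variable [TopologicalSpace X] {T : X → X} {E : Fin K → Set X}

theorem measure_frontier_cyl_eq_zero {μ : Measure X} (hTcont : Continuous T)
    (hT : Measure.QuasiMeasurePreserving T μ μ) (hbd : ∀ k, μ (frontier (E k)) = 0)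
    (n : ℕ) (α : Fin n → Fin K) : μ (frontier (cyl T E n α)) = 0 := by
  have hpreimage (j : Fin n) : μ (frontier (T^[j] ⁻¹' E (α j))) = 0 :=
    measure_mono_null ((hTcont.iterate j).frontier_preimage_subset _)
      ((hT.iterate j).preimage_null (hbd (α j)))
  exact measure_mono_null (frontier_iInter_subset_iUnion_frontier _) (measure_iUnion_null hpreimage)

variable [OpensMeasurableSpace X] [HasOuterApproxClosed X] {μ : ProbabilityMeasure X}

theorem continuousAt_refEntropy (hTcont : Continuous T)
    (hT : Measure.QuasiMeasurePreserving T (μ : Measure X) (μ : Measure X))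
    (hbd : ∀ k, (μ : Measure X) (frontier (E k)) = 0) (n : ℕ) :
    ContinuousAt (fun ν : ProbabilityMeasure X => refEntropy (ν : Measure X) T E n) μ := by
  simp only [refEntropy, eta_eq_negMulLog]
  exact tendsto_finsetSum _ fun α _ => Real.continuous_negMulLog.continuousAt.comp
    (continuousAt_measureReal_of_null_frontier (measure_frontier_cyl_eq_zero hTcont hT hbd n α))

theorem hKS_upper_semicontinuous_general (hTcont : Continuous T)
    (hT : Measure.QuasiMeasurePreserving T (μ : Measure X) (μ : Measure X))
    (hbd : ∀ k, (μ : Measure X) (frontier (E k)) = 0) :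
    UpperSemicontinuousAt (fun ν : ProbabilityMeasure X => hKS (ν : Measure X) T E) μ := by
  have hbelow (ν : ProbabilityMeasure X) :
      BddBelow (Set.range fun n : {m : ℕ // 1 ≤ m} => refEntropy (ν : Measure X) T E n / (n : ℝ)) :=
    ⟨0, Set.forall_mem_range.2 fun n =>
      div_nonneg (refEntropy_nonneg (ν : Measure X) T E n) (Nat.cast_nonneg _)⟩
  exact upperSemicontinuousAt_ciInf (Eventually.of_forall hbelow) fun n =>
    ((continuousAt_refEntropy hTcont hT hbd n).div_const _).upperSemicontinuousAt

end PartitionEntropy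

/-- Upper semicontinuity of the partition entropy rate along weakly convergent
invariant measures. -/
theorem hKS_upper_semicontinuous
    {X : Type*} [MetricSpace X] [CompactSpace X] [MeasurableSpace X] [BorelSpace X]
    (T : X → X) (hTcont : Continuous T)
    {K : ℕ} (E : Fin K → Set X)
    (hmeas : ∀ k, MeasurableSet (E k))
    (hdisj : Pairwise (Function.onFun Disjoint E))
    (hcover : (⋃ k, E k) = Set.univ)
    (μs : ℕ → ProbabilityMeasure X) (μ : ProbabilityMeasure X)
    (hinv : ∀ i, MeasurePreserving T (μs i : Measure X) (μs i : Measure X))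
    (hinvμ : MeasurePreserving T (μ : Measure X) (μ : Measure X))
    (hconv : Tendsto μs atTop (nhds μ))
    (hbd : ∀ k, (μ : Measure X) (frontier (E k)) = 0) :
    hKS (μ : Measure X) T E ≥ atTop.limsup (fun i => hKS (μs i : Measure X) T E) := by
  let h (ν : ProbabilityMeasure X) : ℝ := hKS (ν : Measure X) T E
  have h_usc : UpperSemicontinuousAt h μ :=
    hKS_upper_semicontinuous_general hTcont hinvμ.quasiMeasurePreserving hbd
  have h_cobounded : atTop.IsCoboundedUnder (· ≤ ·) fun i => h (μs i) :=
    (isBoundedUnder_of ⟨0, fun i => hKS_nonneg (μs i : Measure X) T E⟩).isCoboundedUnder_le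
  exact limsup_comp_le_of_upperSemicontinuousAt (f := h) h_usc hconv h_cobounded
end

section
/- Simplification of the pressure term by invariance: let (X, μ) be a probability space and T : X → X a measurable map such that μ is T-invariant. Let f_1, …, f_K : X → [0,1] be measurable functions with Σ_{k=1}^K f_k(x)² = 1 for every x ∈ X, and let c : {1,…,K} × {1,…,K} → ℝ be arbitrary. For n ≥ 2 and α = (α_0,…,α_{n-1}) ∈ {1,…,K}^n set f_α = Π_{j=0}^{n-1} (f_{α_j} ∘ T^j). Then Σ_{α ∈ {1,…,K}^n} ( ∫_X f_α² dμ ) · ( Σ_{i=0}^{n-2} c(α_i, α_{i+1}) ) = (n−1) · Σ_{k,l=1}^{K} ( ∫_X f_k² · (f_l ∘ T)² dμ ) · c(k,l). -/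
open MeasureTheory Finset

/-- Refined function `f_α = Π_{j=0}^{n-1} (f_{α_j} ∘ T^j)`. -/
def fword {X : Type*} {K : ℕ} (T : X → X) (f : Fin K → X → ℝ)
    (n : ℕ) (α : Fin n → Fin K) (x : X) : ℝ :=
  ∏ j : Fin n, f (α j) (T^[(j : ℕ)] x)

/-!
The squares `p k = f k ^ 2` form a partition of unity, and `∫ f_α² dμ` is the mass that it assigns
to the word `α`. Summing this mass over all words with `α_i = k` and `α_{i+1} = l` removes every
factor but two, since `∑ k, p k = 1`, and leaves `∫ (p k · p l ∘ T) ∘ T^i dμ`. By invariance this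
does not depend on `i`, so each of the `n - 1` transitions of a word contributes the same amount.
-/

theorem sum_mul_comp_eq_sum_sum_filter {A ι κ R : Type*} [Fintype A] [Fintype ι] [Fintype κ]
    [DecidableEq ι] [DecidableEq κ] [NonUnitalNonAssocSemiring R]
    (M : A → R) (u : A → ι) (v : A → κ) (c : ι → κ → R) :
    ∑ a, M a * c (u a) (v a) = ∑ k, ∑ l, (∑ a with u a = k ∧ v a = l, M a) * c k l := by
  calc ∑ a, M a * c (u a) (v a)
      = ∑ kl : ι × κ, ∑ a with (u a, v a) = kl, M a * c (u a) (v a) :=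
        (sum_fiberwise univ (fun a => (u a, v a)) _).symm
    _ = ∑ kl : ι × κ, (∑ a with u a = kl.1 ∧ v a = kl.2, M a) * c kl.1 kl.2 := by
        simp only [Prod.ext_iff, sum_mul]
        refine sum_congr rfl fun kl _ => sum_congr rfl fun a ha => ?_
        obtain ⟨hu, hv⟩ := (mem_filter.mp ha).2
        rw [hu, hv]
    _ = ∑ k, ∑ l, (∑ a with u a = k ∧ v a = l, M a) * c k l := Fintype.sum_prod_type _

theorem sum_filter_prod_eq_mul {J ι R : Type*} [Fintype J] [DecidableEq J] [Fintype ι]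
    [DecidableEq ι] [CommSemiring R] {w : J → ι → R} {a b : J} (hab : a ≠ b)
    (hw : ∀ j, j ≠ a → j ≠ b → ∑ k, w j k = 1) (k l : ι) :
    ∑ α : J → ι with α a = k ∧ α b = l, ∏ j, w j (α j) = w a k * w b l := by
  let t : J → Finset ι := fun j => if j = a then {k} else if j = b then {l} else univ
  have filter_eq_piFinset :
      ({α : J → ι | α a = k ∧ α b = l} : Finset (J → ι)) = Fintype.piFinset t := by
    ext α
    simp only [mem_filter_univ, Fintype.mem_piFinset, t]
    grind
  have sum_eq_one (j : J) (hj : j ≠ a ∧ j ≠ b) : ∑ s ∈ t j, w j s = 1 := by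
    simpa [t, hj.1, hj.2] using hw j hj.1 hj.2
  calc ∑ α : J → ι with α a = k ∧ α b = l, ∏ j, w j (α j)
      = ∏ j, ∑ s ∈ t j, w j s := by rw [filter_eq_piFinset, prod_univ_sum]
    _ = (∑ s ∈ t a, w a s) * ∑ s ∈ t b, w b s :=
        prod_eq_mul a b hab (fun j _ => sum_eq_one j) (by simp) (by simp)
    _ = w a k * w b l := by simp [t, hab.symm]

theorem integral_comp_of_measurePreserving {X Y E : Type*} [MeasurableSpace X] [MeasurableSpace Y]
    [NormedAddCommGroup E] [NormedSpace ℝ E] {μ : Measure X} {ν : Measure Y} {S : X → Y}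
    (hS : MeasurePreserving S μ ν) {g : Y → E} (hg : AEStronglyMeasurable g ν) :
    ∫ x, g (S x) ∂μ = ∫ y, g y ∂ν := by
  rw [← hS.map_eq] at hg ⊢
  exact (integral_map hS.aemeasurable hg).symm

theorem integrable_prod_of_mem_unitInterval {X J : Type*} [MeasurableSpace X] {μ : Measure X}
    [IsFiniteMeasure μ] [Fintype J] {F : J → X → ℝ} (hF : ∀ j, AEMeasurable (F j) μ)
    (hF01 : ∀ j x, F j x ∈ unitInterval) : Integrable (fun x => ∏ j, F j x) μ :=
  .of_mem_Icc 0 1 (Finset.aemeasurable_fun_prod univ fun j _ => hF j)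
    (.of_forall fun x => unitInterval.prod_mem fun j _ => hF01 j x)

section PartitionOfUnity

variable {X ι : Type*} [Fintype ι] {p : ι → X → ℝ}

theorem mem_unitInterval_of_sum_eq_one (hp0 : ∀ k x, 0 ≤ p k x) (hsum : ∀ x, ∑ k, p k x = 1)
    (k : ι) (x : X) : p k x ∈ unitInterval :=
  ⟨hp0 k x, (single_le_sum (fun l _ => hp0 l x) (mem_univ k)).trans_eq (hsum x)⟩

variable [MeasurableSpace X] {μ : Measure X} [IsFiniteMeasure μ] {T : X → X}

theorem sum_filter_integral_prod_iterate [DecidableEq ι] (hT : MeasurePreserving T μ μ)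
    (hpm : ∀ k, Measurable (p k)) (hp0 : ∀ k x, 0 ≤ p k x) (hsum : ∀ x, ∑ k, p k x = 1)
    {n : ℕ} (i : Fin n) (k l : ι) :
    ∑ α : Fin (n + 1) → ι with α i.castSucc = k ∧ α i.succ = l,
        ∫ x, ∏ j, p (α j) (T^[(j : ℕ)] x) ∂μ =
      ∫ x, p k x * p l (T x) ∂μ := by
  have integrable_word (α : Fin (n + 1) → ι) :
      Integrable (fun x => ∏ j, p (α j) (T^[(j : ℕ)] x)) μ :=
    integrable_prod_of_mem_unitInterval
      (fun j => ((hpm (α j)).comp (hT.measurable.iterate j)).aemeasurable)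
      (fun j _ => mem_unitInterval_of_sum_eq_one hp0 hsum (α j) _)
  have measurable_pair : Measurable fun x => p k x * p l (T x) :=
    (hpm k).mul ((hpm l).comp hT.measurable)
  calc ∑ α : Fin (n + 1) → ι with α i.castSucc = k ∧ α i.succ = l,
        ∫ x, ∏ j, p (α j) (T^[(j : ℕ)] x) ∂μ
      = ∫ x, ∑ α : Fin (n + 1) → ι with α i.castSucc = k ∧ α i.succ = l,
          ∏ j, p (α j) (T^[(j : ℕ)] x) ∂μ :=
        (integral_finsetSum _ fun α _ => integrable_word α).symm
    _ = ∫ x, p k (T^[(i : ℕ)] x) * p l (T (T^[(i : ℕ)] x)) ∂μ := by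
        congr with x
        rw [sum_filter_prod_eq_mul (w := fun (j : Fin (n + 1)) s => p s (T^[(j : ℕ)] x))
          Fin.castSucc_lt_succ.ne (fun _ _ _ => hsum _)]
        simp only [Fin.val_castSucc, Fin.val_succ, Function.iterate_succ_apply']
    _ = ∫ x, p k x * p l (T x) ∂μ :=
        integral_comp_of_measurePreserving (hT.iterate i) measurable_pair.aestronglyMeasurable

theorem pressure_term_simplification_general (hT : MeasurePreserving T μ μ)
    (hpm : ∀ k, Measurable (p k)) (hp0 : ∀ k x, 0 ≤ p k x) (hsum : ∀ x, ∑ k, p k x = 1)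
    (c : ι → ι → ℝ) (n : ℕ) :
    ∑ α : Fin (n + 1) → ι,
        (∫ x, ∏ j, p (α j) (T^[(j : ℕ)] x) ∂μ) * ∑ i : Fin n, c (α i.castSucc) (α i.succ) =
      n * ∑ k, ∑ l, (∫ x, p k x * p l (T x) ∂μ) * c k l := by
  classical
  calc ∑ α : Fin (n + 1) → ι,
        (∫ x, ∏ j, p (α j) (T^[(j : ℕ)] x) ∂μ) * ∑ i : Fin n, c (α i.castSucc) (α i.succ)
      = ∑ i : Fin n, ∑ α : Fin (n + 1) → ι,
          (∫ x, ∏ j, p (α j) (T^[(j : ℕ)] x) ∂μ) * c (α i.castSucc) (α i.succ) := by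
        simp only [mul_sum]
        exact sum_comm
    _ = ∑ _i : Fin n, ∑ k, ∑ l, (∫ x, p k x * p l (T x) ∂μ) * c k l := by
        refine sum_congr rfl fun i _ => ?_
        rw [sum_mul_comp_eq_sum_sum_filter]
        simp only [sum_filter_integral_prod_iterate hT hpm hp0 hsum]
    _ = n * ∑ k, ∑ l, (∫ x, p k x * p l (T x) ∂μ) * c k l := by
        rw [sum_const, card_univ, Fintype.card_fin, nsmul_eq_mul]

end PartitionOfUnity

/-- Simplification of the pressure term by invariance; the integer `n ≥ 2` of the
informal statement is written as `n = m + 2`. -/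
theorem pressure_term_simplification
    {X : Type*} [MeasurableSpace X] (μ : Measure X) [IsProbabilityMeasure μ]
    (T : X → X) (hT : MeasurePreserving T μ μ)
    {K : ℕ} (f : Fin K → X → ℝ)
    (hfm : ∀ k, Measurable (f k))
    (hf0 : ∀ k x, 0 ≤ f k x) (hf1 : ∀ k x, f k x ≤ 1)
    (hsum : ∀ x, ∑ k, (f k x) ^ 2 = 1)
    (c : Fin K → Fin K → ℝ)
    (m : ℕ) :
    ∑ α : Fin (m + 2) → Fin K,
        (∫ x, (fword T f (m + 2) α x) ^ 2 ∂μ) *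
          (∑ i : Fin (m + 1), c (α i.castSucc) (α i.succ)) =
      ((m : ℝ) + 1) *
        ∑ k : Fin K, ∑ l : Fin K,
          (∫ x, (f k x) ^ 2 * (f l (T x)) ^ 2 ∂μ) * c k l := by
  simpa only [fword, prod_pow, Nat.cast_succ] using
    pressure_term_simplification_general (p := fun k x => f k x ^ 2) hT
      (fun k => (hfm k).pow_const 2) (fun k x => sq_nonneg (f k x)) hsum c (m + 1)
end
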